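/- arXiv:2506.08374 — 2 statements merged into one kernel-verified Lean document; each statement's English description precedes it below -/
import Mathlib

section
/- Let h : ℝ^m → ℝ be convex and differentiable, and let z* ∈ ℝ^m satisfy z* ∈ Prox_{τg}(z* − τ∇h(z*)) for some τ > 0. Then there exists δ > 0 such that for all z ∈ ℝ^m with ‖z − z*‖ < δ and z_i ≥ 0 for all i: if z has the same support as z* (i.e., { i : z_i ≠ 0 } = { i : z*_i ≠ 0 }), then ‖z‖₀ = ‖z*‖₀ and h(z) ≥ h(z*); otherwise, h(z) + μ‖z‖₀ ≥ h(z*) + μ‖z*‖₀ + μ/2. -/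
open scoped RealInnerProductSpace
open Filter Topology

/- Number of nonzero coordinates of `z` (the "ℓ₀ norm"). -/
open Classical in
noncomputable def zeroNorm {m : ℕ} (z : EuclideanSpace ℝ (Fin m)) : ℕ :=
  (Finset.univ.filter fun i => z i ≠ 0).card

/- `g(z) = μ‖z‖₀` if `z ≥ 0` componentwise, `+∞` otherwise. -/
open Classical in
noncomputable def gfun {m : ℕ} (μ : ℝ) (z : EuclideanSpace ℝ (Fin m)) : EReal :=
  if ∀ i, 0 ≤ z i then ((μ * zeroNorm z : ℝ) : EReal) else ⊤

/- The proximal set `Prox_{τ g}(u)`: minimizers of `g(z) + (1/(2τ))‖z - u‖²`. -/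
noncomputable def proxSet {m : ℕ} (μ τ : ℝ) (u : EuclideanSpace ℝ (Fin m)) :
    Set (EuclideanSpace ℝ (Fin m)) :=
  {z | ∀ w, gfun μ z + ((1 / (2 * τ) * ‖z - u‖ ^ 2 : ℝ) : EReal)
        ≤ gfun μ w + ((1 / (2 * τ) * ‖w - u‖ ^ 2 : ℝ) : EReal)}

/-!
Let `z` be a proximal point of `z - τ • d`. Compare it with `z + t • v` for small `t` of either sign
and `v` supported on the support of `z`: the `ℓ₀` terms cancel, so `t⟪d, v⟫ + t²‖v‖²/(2τ)` has a
local minimum at `t = 0` and `d` is orthogonal to every such `v`. If moreover `d` is a subgradient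
of `h` at `z`, then `h` cannot decrease while the support stays fixed. Near `z` the support can only
grow, which costs at least `μ`, whereas the subgradient inequality keeps the loss in `h` below
`μ / 2`.
-/

theorem le_sub_of_convexOn_of_hasLineDerivWithinAt {E : Type*} [AddCommGroup E] [Module ℝ E]
    {s : Set E} {f : E → ℝ} {x y : E} {f' : ℝ} (hf : ConvexOn ℝ s f) (hx : x ∈ s) (hy : y ∈ s)
    (hf' : HasLineDerivWithinAt ℝ f f' s x (y - x)) : f' ≤ f y - f x := by
  have hline : ⇑(AffineMap.lineMap (k := ℝ) x y) = fun t ↦ x + t • (y - x) := by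
    ext t
    rw [AffineMap.lineMap_apply_module', add_comm]
  have hconv := hf.comp_affineMap (AffineMap.lineMap (k := ℝ) x y)
  rw [hline] at hconv
  have hslope := hconv.le_slope_of_hasDerivWithinAt (x := 0) (y := 1)
    (by simpa using hx) (by simpa using hy) zero_lt_one hf'
  simpa [slope_def_field] using hslope

theorem add_inner_le_of_convexOn_of_hasGradientWithinAt {F : Type*} [NormedAddCommGroup F]
    [InnerProductSpace ℝ F] [CompleteSpace F] {s : Set F} {f : F → ℝ} {x y f' : F}
    (hf : ConvexOn ℝ s f) (hx : x ∈ s) (hy : y ∈ s) (hf' : HasGradientWithinAt f f' s x) :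
    f x + ⟪f', y - x⟫ ≤ f y := by
  have hline : HasLineDerivWithinAt ℝ f ⟪f', y - x⟫ s x (y - x) :=
    hf'.hasFDerivWithinAt.hasLineDerivWithinAt (y - x)
  linarith [le_sub_of_convexOn_of_hasLineDerivWithinAt hf hx hy hline]

theorem eventually_forall_pos_of_pos {ι : Type*} [Finite ι] (z : EuclideanSpace ℝ ι) :
    ∀ᶠ w in 𝓝 z, ∀ i, 0 < z i → 0 < w i := by
  refine eventually_all.2 fun i ↦ eventually_imp_distrib_left.2 fun hi ↦ ?_
  have hcoord : ContinuousAt (fun w : EuclideanSpace ℝ ι ↦ w i) z := by fun_prop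
  exact hcoord.eventually_const_lt hi

section

variable {m : ℕ} {μ τ : ℝ} {z w u d v : EuclideanSpace ℝ (Fin m)}

theorem zeroNorm_eq_ncard (z : EuclideanSpace ℝ (Fin m)) : zeroNorm z = {i | z i ≠ 0}.ncard := by
  classical
  simp [zeroNorm, Set.ncard_eq_toFinset_card']

theorem zeroNorm_lt_zeroNorm (h : {i | z i ≠ 0} ⊂ {i | w i ≠ 0}) : zeroNorm z < zeroNorm w := by
  simpa only [zeroNorm_eq_ncard] using Set.ncard_lt_ncard h

theorem gfun_of_nonneg (μ : ℝ) (hz : ∀ i, 0 ≤ z i) : gfun μ z = (μ * zeroNorm z : ℝ) :=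
  if_pos hz

theorem nonneg_of_mem_proxSet (hz : z ∈ proxSet μ τ u) : ∀ i, 0 ≤ z i := by
  by_contra hneg
  have hle := hz 0
  rw [gfun, if_neg hneg, gfun_of_nonneg μ fun _ ↦ le_rfl, EReal.top_add_coe, ← EReal.coe_add,
    top_le_iff] at hle
  exact EReal.coe_ne_top _ hle

theorem mul_zeroNorm_le_of_mem_proxSet (hτ : τ ≠ 0) (hz : z ∈ proxSet μ τ (z - τ • d))
    (hw : ∀ i, 0 ≤ w i) :
    μ * zeroNorm z ≤ μ * zeroNorm w + (⟪d, w - z⟫ + 1 / (2 * τ) * ‖w - z‖ ^ 2) := by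
  have hle := hz w
  rw [gfun_of_nonneg μ (nonneg_of_mem_proxSet hz), gfun_of_nonneg μ hw, ← EReal.coe_add,
    ← EReal.coe_add, EReal.coe_le_coe_iff, sub_sub_cancel] at hle
  have hexpand : 1 / (2 * τ) * ‖w - (z - τ • d)‖ ^ 2
      = ⟪d, w - z⟫ + 1 / (2 * τ) * ‖w - z‖ ^ 2 + 1 / (2 * τ) * ‖τ • d‖ ^ 2 := by
    rw [sub_sub_eq_add_sub, add_sub_right_comm, norm_add_sq_real, inner_smul_right,
      real_inner_comm]
    field_simp
    ring
  linarith

theorem eventually_nonneg_and_support_eq_of_support_subset (hz : ∀ i, 0 ≤ z i)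
    (hv : {i | v i ≠ 0} ⊆ {i | z i ≠ 0}) :
    ∀ᶠ t : ℝ in 𝓝 0, (∀ i, 0 ≤ (z + t • v) i) ∧ {i | (z + t • v) i ≠ 0} = {i | z i ≠ 0} := by
  have hline : Tendsto (fun t : ℝ ↦ z + t • v) (𝓝 0) (𝓝 z) :=
    Continuous.tendsto' (by fun_prop) _ _ (by simp)
  filter_upwards [hline.eventually (eventually_forall_pos_of_pos z)] with t hpos
  have hzero : ∀ i, z i = 0 → (z + t • v) i = 0 := fun i hi ↦ by
    have hvi : v i = 0 := by_contra fun hne ↦ hv hne hi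
    simp [hi, hvi]
  have hpos' : ∀ i, z i ≠ 0 → 0 < (z + t • v) i := fun i hi ↦ hpos i ((hz i).lt_of_ne' hi)
  constructor
  · intro i
    by_cases hi : z i = 0
    exacts [(hzero i hi).ge, (hpos' i hi).le]
  · ext i
    exact ⟨mt (hzero i), fun hi ↦ (hpos' i hi).ne'⟩

theorem inner_eq_zero_of_mem_proxSet (hτ : τ ≠ 0) (hz : z ∈ proxSet μ τ (z - τ • d))
    (hv : {i | v i ≠ 0} ⊆ {i | z i ≠ 0}) : ⟪d, v⟫ = 0 := by
  let φ : ℝ → ℝ := fun t ↦ t * ⟪d, v⟫ + 1 / (2 * τ) * (t ^ 2 * ‖v‖ ^ 2)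
  have hmin : IsLocalMin φ 0 := by
    filter_upwards [eventually_nonneg_and_support_eq_of_support_subset
      (nonneg_of_mem_proxSet hz) hv] with t ⟨hnonneg, hsupp⟩
    have hle := mul_zeroNorm_le_of_mem_proxSet hτ hz hnonneg
    rw [zeroNorm_eq_ncard (z + t • v), hsupp, ← zeroNorm_eq_ncard, add_sub_cancel_left,
      inner_smul_right, norm_smul, mul_pow, Real.norm_eq_abs, sq_abs] at hle
    simpa [φ] using hle
  have hderiv : HasDerivAt φ ⟪d, v⟫ 0 := by
    have hlin := (hasDerivAt_id (0 : ℝ)).mul_const ⟪d, v⟫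
    have hquad := (((hasDerivAt_id (0 : ℝ)).pow 2).mul_const (‖v‖ ^ 2)).const_mul (1 / (2 * τ))
    simpa [φ] using hlin.fun_add hquad
  exact hmin.hasDerivAt_eq_zero hderiv

end

theorem stmt13_general {m : ℕ} {μ τ : ℝ} (hμ : 0 < μ) (hτ : τ ≠ 0)
    {h : EuclideanSpace ℝ (Fin m) → ℝ} {zstar d : EuclideanSpace ℝ (Fin m)}
    (hsub : ∀ z : EuclideanSpace ℝ (Fin m), (∀ i, 0 ≤ z i) → h zstar + ⟪d, z - zstar⟫ ≤ h z)
    (hstat : zstar ∈ proxSet μ τ (zstar - τ • d)) :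
    ∃ δ : ℝ, 0 < δ ∧ ∀ z : EuclideanSpace ℝ (Fin m),
      ‖z - zstar‖ < δ → (∀ i, 0 ≤ z i) →
      (({i | z i ≠ 0} = {i | zstar i ≠ 0}) →
          zeroNorm z = zeroNorm zstar ∧ h zstar ≤ h z) ∧
      (({i | z i ≠ 0} ≠ {i | zstar i ≠ 0}) →
          h zstar + μ * zeroNorm zstar + μ / 2 ≤ h z + μ * zeroNorm z) := by
  have hinner : ∀ᶠ z in 𝓝 zstar, -(μ / 2) < ⟪d, z - zstar⟫ := by
    have hcont : ContinuousAt (fun z ↦ ⟪d, z - zstar⟫) zstar := by fun_prop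
    exact hcont.eventually_const_lt (by simpa using hμ)
  obtain ⟨δ, hδ, hball⟩ :=
    Metric.eventually_nhds_iff.1 (hinner.and (eventually_forall_pos_of_pos zstar))
  refine ⟨δ, hδ, fun z hz hz0 ↦ ?_⟩
  obtain ⟨hloss, hpos⟩ := hball (dist_eq_norm z zstar ▸ hz)
  have hsub_z := hsub z hz0
  refine ⟨fun hsupp ↦ ⟨by rw [zeroNorm_eq_ncard, hsupp, zeroNorm_eq_ncard], ?_⟩, fun hsupp ↦ ?_⟩
  · have hdir : {i | (z - zstar) i ≠ 0} ⊆ {i | zstar i ≠ 0} := fun i hi hzi ↦ by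
      have hzi' : z i = 0 := by_contra fun hne ↦ (hsupp.subset hne) hzi
      exact hi (by simp [hzi, hzi'])
    linarith [inner_eq_zero_of_mem_proxSet hτ hstat hdir]
  · have hsubset : {i | zstar i ≠ 0} ⊆ {i | z i ≠ 0} := fun i hi ↦
      (hpos i ((nonneg_of_mem_proxSet hstat i).lt_of_ne' hi)).ne'
    have hcard : (zeroNorm zstar : ℝ) + 1 ≤ zeroNorm z :=
      mod_cast zeroNorm_lt_zeroNorm (hsubset.ssubset_of_ne hsupp.symm)
    linarith [mul_le_mul_of_nonneg_left hcard hμ.le]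

/-- near a P-stationary point `z*` of `h + g`, nonnegative points
with the same support as `z*` have equal `ℓ₀` norm and `h(z) ≥ h(z*)`, while those
with a different support satisfy `h(z) + μ‖z‖₀ ≥ h(z*) + μ‖z*‖₀ + μ/2`. -/
theorem stmt13 {m : ℕ} (μ τ : ℝ) (hμ : 0 < μ) (hτ : 0 < τ)
    (h : EuclideanSpace ℝ (Fin m) → ℝ)
    (h' : EuclideanSpace ℝ (Fin m) → EuclideanSpace ℝ (Fin m))
    (hconv : ConvexOn ℝ Set.univ h)
    (hdiff : ∀ z, HasGradientAt h (h' z) z)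
    (zstar : EuclideanSpace ℝ (Fin m))
    (hstat : zstar ∈ proxSet μ τ (zstar - τ • h' zstar)) :
    ∃ δ : ℝ, 0 < δ ∧ ∀ z : EuclideanSpace ℝ (Fin m),
      ‖z - zstar‖ < δ → (∀ i, 0 ≤ z i) →
      (({i | z i ≠ 0} = {i | zstar i ≠ 0}) →
          zeroNorm z = zeroNorm zstar ∧ h zstar ≤ h z) ∧
      (({i | z i ≠ 0} ≠ {i | zstar i ≠ 0}) →
          h zstar + μ * zeroNorm zstar + μ / 2 ≤ h z + μ * zeroNorm z) := by
  exact stmt13_general hμ hτ.ne' (fun _ _ ↦ add_inner_le_of_convexOn_of_hasGradientWithinAt hconv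
    trivial trivial (hasGradientWithinAt_univ.2 (hdiff zstar))) hstat
end

section
/- Let h : ℝ^m → ℝ be differentiable with ℓ_h-Lipschitz gradient (ℓ_h > 0), τ > 0, z ∈ ℝ^m, and v ∈ Prox_{τg}(z − τ∇h(z)). Define p := (z − v)/τ + ∇h(v) − ∇h(z). Then v_i ≥ 0 for all i, (p − ∇h(v))_i = 0 for every i with v_i > 0 (i.e. p ∈ ∇h(v) + ∂g(v)), and ‖p‖ ≤ (1/τ + ℓ_h)‖v − z‖. -/
open scoped RealInnerProductSpace
open Filter Topology

/-!
`gfun μ` depends only on the signs of the coordinates, so it is constant along `v + t • eᵢ` for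
small `t` as soon as `v i ≠ 0`. A minimizer `v` of `gfun μ + (2τ)⁻¹ ‖· - u‖²` is therefore a
critical point of the quadratic term in the direction `eᵢ`, that is `v i = u i`; for
`u = z - τ ∇h(z)` this is the inclusion `p ∈ ∇h(v) + ∂g(v)`. The bound on `p` is the triangle
inequality.
-/

section InnerProductSpace

variable {E : Type*} [NormedAddCommGroup E] [InnerProductSpace ℝ E]

lemma hasDerivAt_norm_add_smul_sub_sq (v d u : E) :
    HasDerivAt (fun t : ℝ => ‖v + t • d - u‖ ^ 2) (2 * ⟪v - u, d⟫) 0 := by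
  have hline : HasDerivAt (fun t : ℝ => v + t • d - u) d 0 := by
    simpa using (((hasDerivAt_id (0 : ℝ)).smul_const d).const_add v).sub_const u
  simpa using hline.norm_sq

lemma inner_sub_eq_zero_of_isLocalMin_add_norm_sq {f : E → EReal} {c : ℝ} (hc : c ≠ 0) {u v d : E}
    (hmin : IsLocalMin (fun w => f w + ((c * ‖w - u‖ ^ 2 : ℝ) : EReal)) v)
    (hbot : f v ≠ ⊥) (htop : f v ≠ ⊤)
    (hconst : ∀ᶠ t : ℝ in 𝓝 0, f (v + t • d) = f v) :
    ⟪v - u, d⟫ = 0 := by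
  lift f v to ℝ using ⟨htop, hbot⟩ with r hr
  have hline : Tendsto (fun t : ℝ => v + t • d) (𝓝 0) (𝓝 v) :=
    Continuous.tendsto' (by fun_prop) 0 v (by simp)
  have hmin_line : IsLocalMin (fun t : ℝ => c * ‖v + t • d - u‖ ^ 2) 0 := by
    filter_upwards [hline.eventually hmin, hconst] with t hle hft
    rw [hft, ← hr] at hle
    rw [(EReal.addLECancellable_coe r).add_le_add_iff_left, EReal.coe_le_coe_iff] at hle
    simpa only [zero_smul, add_zero] using hle
  have hderiv : c * (2 * ⟪v - u, d⟫) = 0 :=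
    hmin_line.hasDerivAt_eq_zero ((hasDerivAt_norm_add_smul_sub_sq v d u).const_mul c)
  simpa [hc] using hderiv

end InnerProductSpace

lemma norm_smul_sub_add_sub_le {E : Type*} [SeminormedAddCommGroup E] [NormedSpace ℝ E]
    {a ℓ : ℝ} (ha : 0 ≤ a) {F : E → E} {z v : E} (hF : ‖F v - F z‖ ≤ ℓ * ‖v - z‖) :
    ‖a • (z - v) + F v - F z‖ ≤ (a + ℓ) * ‖v - z‖ :=
  calc ‖a • (z - v) + F v - F z‖
      = ‖a • (z - v) + (F v - F z)‖ := by rw [add_sub_assoc]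
    _ ≤ ‖a • (z - v)‖ + ‖F v - F z‖ := norm_add_le _ _
    _ ≤ a * ‖v - z‖ + ℓ * ‖v - z‖ := by
        rw [norm_smul, Real.norm_of_nonneg ha, norm_sub_rev z v]
        gcongr
    _ = (a + ℓ) * ‖v - z‖ := by ring

section Prox

variable {m : ℕ} {μ τ : ℝ} {u v w : EuclideanSpace ℝ (Fin m)} {i : Fin m}

lemma gfun_ne_bot : gfun μ v ≠ ⊥ := by
  unfold gfun
  split_ifs
  exacts [EReal.coe_ne_bot _, top_ne_bot]

lemma gfun_ne_top_iff : gfun μ v ≠ ⊤ ↔ ∀ j, 0 ≤ v j := by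
  unfold gfun
  split_ifs with hv
  · exact iff_of_true (EReal.coe_ne_top _) hv
  · exact iff_of_false (not_not_intro rfl) hv

lemma gfun_eq_of_sign_eq (hsign : ∀ j, SignType.sign (w j) = SignType.sign (v j)) :
    gfun μ w = gfun μ v := by
  have hnonneg (j : Fin m) : 0 ≤ w j ↔ 0 ≤ v j := by
    rw [← sign_nonneg_iff, hsign, sign_nonneg_iff]
  have hne (j : Fin m) : w j ≠ 0 ↔ v j ≠ 0 := by
    rw [← sign_ne_zero, hsign, sign_ne_zero]
  simp only [gfun, zeroNorm, hnonneg, hne]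

lemma eventually_gfun_add_smul_single_eq (hvi : v i ≠ 0) :
    ∀ᶠ t : ℝ in 𝓝 0, gfun μ (v + t • EuclideanSpace.single i 1) = gfun μ v := by
  have hline : Tendsto (fun t : ℝ => v i + t) (𝓝 0) (𝓝 (v i)) :=
    Continuous.tendsto' (by fun_prop) 0 (v i) (add_zero _)
  have hsign : ∀ᶠ t : ℝ in 𝓝 0, SignType.sign (v i + t) = SignType.sign (v i) :=
    hline.eventually <| (continuousAt_sign_of_ne_zero hvi).eventually <|
      mem_nhds_discrete.2 (Set.mem_singleton _)
  filter_upwards [hsign] with t ht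
  refine gfun_eq_of_sign_eq fun j => ?_
  obtain rfl | hji := eq_or_ne j i
  · simpa using ht
  · simp [hji]

lemma gfun_ne_top_of_mem_proxSet (hv : v ∈ proxSet μ τ u) : gfun μ v ≠ ⊤ := by
  intro htop
  have hle := hv 0
  rw [htop, EReal.top_add_coe, top_le_iff] at hle
  have hzero : gfun μ (0 : EuclideanSpace ℝ (Fin m)) ≠ ⊤ := gfun_ne_top_iff.2 fun _ => le_rfl
  exact EReal.add_ne_top hzero (EReal.coe_ne_top _) hle

lemma nonneg_of_mem_proxSet_s15 (hv : v ∈ proxSet μ τ u) (j : Fin m) : 0 ≤ v j :=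
  gfun_ne_top_iff.1 (gfun_ne_top_of_mem_proxSet hv) j

lemma apply_eq_of_mem_proxSet (hτ : τ ≠ 0) (hv : v ∈ proxSet μ τ u) (hvi : v i ≠ 0) :
    v i = u i := by
  have horth : ⟪v - u, EuclideanSpace.single i (1 : ℝ)⟫ = 0 :=
    inner_sub_eq_zero_of_isLocalMin_add_norm_sq (f := gfun μ) (c := 1 / (2 * τ)) (by simpa using hτ)
      (Eventually.of_forall hv) gfun_ne_bot (gfun_ne_top_of_mem_proxSet hv)
      (eventually_gfun_add_smul_single_eq hvi)
  simpa [EuclideanSpace.inner_single_right, sub_eq_zero] using horth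

end Prox

/-- for `v ∈ Prox_{τg}(z − τ∇h(z))` and
`p = (z − v)/τ + ∇h(v) − ∇h(z)`, one has `v ≥ 0`, `p ∈ ∇h(v) + ∂g(v)`
(i.e. `(p − ∇h(v))ᵢ = 0` whenever `vᵢ > 0`), and `‖p‖ ≤ (1/τ + ℓ_h)‖v − z‖`. -/
theorem stmt15 {m : ℕ} (μ ℓh τ : ℝ) (hμ : 0 < μ) (hℓ : 0 < ℓh) (hτ : 0 < τ)
    (h : EuclideanSpace ℝ (Fin m) → ℝ)
    (h' : EuclideanSpace ℝ (Fin m) → EuclideanSpace ℝ (Fin m))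
    (hdiff : ∀ z, HasGradientAt h (h' z) z)
    (hlip : ∀ x y, ‖h' x - h' y‖ ≤ ℓh * ‖x - y‖)
    (z v : EuclideanSpace ℝ (Fin m))
    (hv : v ∈ proxSet μ τ (z - τ • h' z)) :
    (∀ i, 0 ≤ v i) ∧
    (∀ i, 0 < v i →
      ((1 / τ) • (z - v) + h' v - h' z) i - h' v i = 0) ∧
    ‖(1 / τ) • (z - v) + h' v - h' z‖ ≤ (1 / τ + ℓh) * ‖v - z‖ := by
  refine ⟨nonneg_of_mem_proxSet_s15 hv, fun i hi => ?_,
    norm_smul_sub_add_sub_le (one_div_pos.2 hτ).le (hlip v z)⟩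
  have hvi : v i = z i - τ * h' z i := apply_eq_of_mem_proxSet hτ.ne' hv hi.ne'
  simp only [PiLp.sub_apply, PiLp.add_apply, PiLp.smul_apply, smul_eq_mul, hvi]
  field_simp
  ring
end
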